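/- Let B be a complex Hilbert space, let L : B → B be a bounded normal linear operator (L L* = L* L) with spectral radius r(L) > 1, let a > 0, and let α : [0,a] → [0,∞) be a nondecreasing function satisfying the integrability condition ∫₀^a α(s)/s ds < ∞. Let 𝓕 : B → B satisfy 𝓕(0) = 0 and ‖𝓕(u) − Lu‖ ≤ α(‖u‖)·‖u‖ whenever ‖u‖ ≤ a. Then the equilibrium u = 0 of the iteration u_{n+1} = 𝓕(u_n) is exponentially unstable at the linear rate ρ = r(L): there exist ε > 0 and C > 0 such that for every δ > 0 there is an initial datum u₀ with 0 < ‖u₀‖ ≤ δ whose orbit (u_n) satisfies ‖u_n‖ ≥ C·r(L)ⁿ·‖u₀‖ for every n ∈ ℕ such that max(‖u₀‖, …, ‖u_n‖) ≤ ε. -/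

import Mathlib

open MeasureTheory

/-!
Let `r = ‖L‖` and compare the orbit `u n` of a small vector `v` with its linear orbit `L ^ n v`.
As long as `‖u k‖ ≤ s k := 2 * r ^ k * ‖v‖`, the error obeys
`‖u (k + 1) - L ^ (k + 1) v‖ ≤ r * ‖u k - L ^ k v‖ + α (s k) * s k`, so relative to `r ^ n * ‖v‖`
it is at most a multiple of `∑ α (s k)`. The radii `s k` grow geometrically, so this sum is
comparable to `∫ α t / t` up to `s n`, which is small when `s n` is: the error never exceeds half of
`r ^ n * ‖v‖`. Since `‖L ^ N‖ = ‖L‖ ^ N`, the direction of `v` can be chosen so that `‖L ^ n v‖` is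
almost `r ^ n * ‖v‖` for all `n ≤ N`, where `N` is the last time at which `s N` is small enough for
the error estimate. By then the orbit has left a ball of fixed radius.
-/

section CStarAlgebra

variable {A : Type*} [CStarAlgebra A]

lemma norm_eq_of_spectralRadius_eq_ofReal {a : A} [IsStarNormal a] {r : ℝ} (hr : 0 ≤ r)
    (h : spectralRadius ℂ a = ENNReal.ofReal r) : ‖a‖ = r := by
  rw [IsStarNormal.spectralRadius_eq_nnnorm, ← enorm_eq_nnnorm, ← ofReal_norm] at h
  exact (ENNReal.ofReal_eq_ofReal_iff (norm_nonneg a) hr).1 h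

lemma norm_pow_of_isStarNormal (a : A) [IsStarNormal a] {n : ℕ} (hn : n ≠ 0) :
    ‖a ^ n‖ = ‖a‖ ^ n := by
  have : IsStarNormal (a ^ n) := ⟨by
    rw [star_pow]
    exact (star_comm_self : Commute (star a) a).pow_pow n n⟩
  refine (norm_pow_le' a hn.pos).antisymm ?_
  have h := spectrum.spectralRadius_pow_le (𝕜 := ℂ) a n hn
  rw [IsStarNormal.spectralRadius_eq_nnnorm, IsStarNormal.spectralRadius_eq_nnnorm] at h
  exact_mod_cast h

end CStarAlgebra

section DiniModulus

/-- A Dini modulus on `[0, a]`: a nonnegative, nondecreasing function `α` with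
`∫₀ᵃ α t / t dt < ∞`. It bounds the relative size of the nonlinear part of a map near a fixed
point. -/
structure IsDiniModulus (α : ℝ → ℝ) (a : ℝ) : Prop where
  monotoneOn : MonotoneOn α (Set.Icc 0 a)
  nonneg : ∀ s ∈ Set.Icc 0 a, 0 ≤ α s
  integrableOn : IntegrableOn (fun s => α s / s) (Set.Ioc 0 a)

/-- The Dini integral `∫₀ˢ α t / t dt`, which controls sums of `α` along geometric sequences ending
at `s`. -/
noncomputable def diniIntegral (α : ℝ → ℝ) (s : ℝ) : ℝ :=
  ∫ t in Set.Ioc 0 s, α t / t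

namespace IsDiniModulus

variable {α : ℝ → ℝ} {a s t r : ℝ}

lemma integrableOn_Ioc (hα : IsDiniModulus α a) (hs : 0 ≤ s) (hta : t ≤ a) :
    IntegrableOn (fun x => α x / x) (Set.Ioc s t) :=
  hα.integrableOn.mono_set (Set.Ioc_subset_Ioc hs hta)

lemma diniIntegral_nonneg (hα : IsDiniModulus α a) (hsa : s ≤ a) : 0 ≤ diniIntegral α s :=
  setIntegral_nonneg measurableSet_Ioc fun x hx =>
    div_nonneg (hα.nonneg x ⟨hx.1.le, hx.2.trans hsa⟩) hx.1.le

lemma diniIntegral_le_diniIntegral (hα : IsDiniModulus α a) (hst : s ≤ t) (hta : t ≤ a) :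
    diniIntegral α s ≤ diniIntegral α t := by
  refine setIntegral_mono_set (hα.integrableOn_Ioc le_rfl hta) ?_
    (Set.Ioc_subset_Ioc le_rfl hst).eventuallyLE
  filter_upwards [ae_restrict_mem measurableSet_Ioc] with x hx
  exact div_nonneg (hα.nonneg x ⟨hx.1.le, hx.2.trans hta⟩) hx.1.le

lemma mul_le_setIntegral_Ioc (hα : IsDiniModulus α a) (hs : 0 < s) (hst : s ≤ t) (hta : t ≤ a) :
    (t - s) * (α s / t) ≤ ∫ x in Set.Ioc s t, α x / x := by
  have hconst : ∫ _ in Set.Ioc s t, α s / t = (t - s) * (α s / t) := by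
    rw [setIntegral_const, Real.volume_real_Ioc_of_le hst, smul_eq_mul]
  rw [← hconst]
  refine setIntegral_mono_on (integrableOn_const (by simp)) (hα.integrableOn_Ioc hs.le hta)
    measurableSet_Ioc fun x ⟨hsx, hxt⟩ => ?_
  have hx : x ∈ Set.Icc 0 a := ⟨(hs.trans hsx).le, hxt.trans hta⟩
  exact div_le_div₀ (hα.nonneg x hx) (hα.monotoneOn ⟨hs.le, hst.trans hta⟩ hx hsx.le)
    (hs.trans hsx) hxt

lemma diniIntegral_add_le_diniIntegral_mul (hα : IsDiniModulus α a) (hr : 1 ≤ r) (hs : 0 < s)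
    (hrs : r * s ≤ a) :
    diniIntegral α s + (r - 1) / r * α s ≤ diniIntegral α (r * s) := by
  have hsrs : s ≤ r * s := le_mul_of_one_le_left hs.le hr
  have hr0 : r ≠ 0 := (zero_lt_one.trans_le hr).ne'
  have hsplit : diniIntegral α (r * s) =
      diniIntegral α s + ∫ x in Set.Ioc s (r * s), α x / x := by
    rw [diniIntegral, ← Set.Ioc_union_Ioc_eq_Ioc hs.le hsrs,
      setIntegral_union (Set.Ioc_disjoint_Ioc_of_le le_rfl) measurableSet_Ioc
        (hα.integrableOn_Ioc le_rfl (hsrs.trans hrs)) (hα.integrableOn_Ioc hs.le hrs),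
      diniIntegral]
  have hincr := hα.mul_le_setIntegral_Ioc hs hsrs hrs
  have hcoeff : (r * s - s) * (α s / (r * s)) = (r - 1) / r * α s := by field_simp
  rw [hsplit, ← hcoeff]
  gcongr

lemma exists_diniIntegral_lt (hα : IsDiniModulus α a) (ha : 0 < a) {c : ℝ} (hc : 0 < c) :
    ∃ t ∈ Set.Ioc 0 a, diniIntegral α t < c := by
  have hcont : ContinuousOn (diniIntegral α) (Set.Icc 0 a) :=
    intervalIntegral.continuousOn_primitive
      ((integrableOn_Icc_iff_integrableOn_Ioc (by simp)).2 hα.integrableOn)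
  have hlim := (hcont 0 ⟨le_rfl, ha.le⟩).mono_left (nhdsWithin_mono 0 Set.Ioc_subset_Icc_self)
  rw [nhdsWithin_Ioc_eq_nhdsGT ha] at hlim
  have hsmall := hlim.eventually_lt_const (u := c) (by simpa [diniIntegral] using hc)
  obtain ⟨t, ht, hta⟩ := (hsmall.and (Ioc_mem_nhdsGT ha)).exists
  exact ⟨t, hta, ht⟩

end IsDiniModulus

end DiniModulus

section LinearGrowth

variable {𝕜 E : Type*} [NontriviallyNormedField 𝕜] [SeminormedAddCommGroup E] [NormedSpace 𝕜 E]

lemma norm_pow_apply_le (L : E →L[𝕜] E) (n : ℕ) (x : E) : ‖(L ^ n) x‖ ≤ ‖L‖ ^ n * ‖x‖ := by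
  induction n with
  | zero => simp
  | succ n ih =>
    rw [pow_succ', mul_apply_eq_comp, pow_succ', mul_assoc]
    exact L.le_opNorm_of_le ih

variable {L : E →L[𝕜] E}

lemma mul_pow_mul_norm_le_norm_pow_apply (hL : 0 < ‖L‖) {N n : ℕ} (hn : n ≤ N) {c : ℝ} {x : E}
    (hx : c * ‖L‖ ^ N * ‖x‖ ≤ ‖(L ^ N) x‖) : c * ‖L‖ ^ n * ‖x‖ ≤ ‖(L ^ n) x‖ := by
  refine le_of_mul_le_mul_left ?_ (pow_pos hL (N - n))
  calc ‖L‖ ^ (N - n) * (c * ‖L‖ ^ n * ‖x‖) = c * ‖L‖ ^ N * ‖x‖ := by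
        rw [← pow_sub_mul_pow ‖L‖ hn]; ring
    _ ≤ ‖(L ^ N) x‖ := hx
    _ = ‖(L ^ (N - n)) ((L ^ n) x)‖ := by rw [← mul_apply_eq_comp, pow_sub_mul_pow L hn]
    _ ≤ ‖L‖ ^ (N - n) * ‖(L ^ n) x‖ := norm_pow_apply_le L (N - n) _

lemma exists_shell_forall_mul_pow_mul_norm_le_norm_pow_apply (hL : 0 < ‖L‖) {N : ℕ}
    (hN : ‖L ^ N‖ = ‖L‖ ^ N) {c : ℝ} (hc0 : 0 ≤ c) (hc1 : c < 1) {κ : 𝕜} (hκ : 1 < ‖κ‖)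
    {δ : ℝ} (hδ : 0 < δ) :
    ∃ v : E, δ / ‖κ‖ ≤ ‖v‖ ∧ ‖v‖ < δ ∧ ∀ n ≤ N, c * ‖L‖ ^ n * ‖v‖ ≤ ‖(L ^ n) v‖ := by
  have hlt : c * ‖L‖ ^ N < ‖L ^ N‖ := by
    rw [hN]
    exact mul_lt_of_lt_one_left (pow_pos hL N) hc1
  obtain ⟨w, hw⟩ := (L ^ N).exists_mul_lt_of_lt_opNorm (by positivity) hlt
  have hw0 : ‖w‖ ≠ 0 := fun h => by
    have hle := (L ^ N).le_opNorm w
    rw [h, mul_zero] at hw hle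
    exact hw.not_ge hle
  obtain ⟨k, -, hlt, hge, -⟩ := rescale_to_shell_semi_normed hκ hδ hw0
  refine ⟨k • w, hge, hlt, fun n hn => mul_pow_mul_norm_le_norm_pow_apply hL hn ?_⟩
  rw [map_smul, norm_smul, norm_smul, mul_left_comm]
  gcongr

end LinearGrowth

section Instability

variable {𝕜 E : Type*} [NontriviallyNormedField 𝕜] [SeminormedAddCommGroup E] [NormedSpace 𝕜 E]
  {L : E →L[𝕜] E} {F : E → E} {α : ℝ → ℝ} {a : ℝ}

/-- Exponential instability at rate `ρ` of the equilibrium `0` of `u (n + 1) = F (u n)`: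
arbitrarily small initial data have orbits growing at least like `ρ ^ n` for as long as they stay
in a fixed ball. -/
def IsExponentiallyUnstable (F : E → E) (ρ : ℝ) : Prop :=
  ∃ ε > (0 : ℝ), ∃ C > (0 : ℝ), ∀ δ > (0 : ℝ), ∃ u : ℕ → E,
    (∀ n, u (n + 1) = F (u n)) ∧ 0 < ‖u 0‖ ∧ ‖u 0‖ ≤ δ ∧
      ∀ n : ℕ, (∀ k ≤ n, ‖u k‖ ≤ ε) → C * ρ ^ n * ‖u 0‖ ≤ ‖u n‖

lemma norm_sub_apply_le_mul_add (hα : IsDiniModulus α a)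
    (hF : ∀ u : E, ‖u‖ ≤ a → ‖F u - L u‖ ≤ α ‖u‖ * ‖u‖) {x : E} (y : E) {s : ℝ} (hxs : ‖x‖ ≤ s)
    (hsa : s ≤ a) : ‖F x - L y‖ ≤ ‖L‖ * ‖x - y‖ + α s * s := by
  have hs : s ∈ Set.Icc 0 a := ⟨(norm_nonneg x).trans hxs, hsa⟩
  have hx : ‖x‖ ∈ Set.Icc 0 a := ⟨norm_nonneg x, hxs.trans hsa⟩
  calc ‖F x - L y‖ = ‖L (x - y) + (F x - L x)‖ := by rw [map_sub]; congr 1; abel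
    _ ≤ ‖L (x - y)‖ + ‖F x - L x‖ := norm_add_le _ _
    _ ≤ ‖L‖ * ‖x - y‖ + α ‖x‖ * ‖x‖ := add_le_add (L.le_opNorm _) (hF x hx.2)
    _ ≤ ‖L‖ * ‖x - y‖ + α s * s := by
      have := hα.nonneg s hs
      have := hα.monotoneOn hx hs hxs
      gcongr

lemma mul_norm_iterate_sub_pow_apply_le (hL : 1 ≤ ‖L‖) (hα : IsDiniModulus α a)
    (hF : ∀ u : E, ‖u‖ ≤ a → ‖F u - L u‖ ≤ α ‖u‖ * ‖u‖) {v : E} {s : ℝ} (hs : 0 < s) {n : ℕ}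
    (hsa : ‖L‖ ^ n * s ≤ a) (hv : ∀ k < n, ‖F^[k] v‖ ≤ ‖L‖ ^ k * s) :
    (‖L‖ - 1) * ‖F^[n] v - (L ^ n) v‖ ≤ ‖L‖ ^ n * s * diniIntegral α (‖L‖ ^ n * s) := by
  induction n with
  | zero =>
    have := hα.diniIntegral_nonneg hsa
    simp only [Function.iterate_zero, id_eq, pow_zero, one_apply_eq_self, sub_self, norm_zero,
      mul_zero]
    positivity
  | succ n ih =>
    set r := ‖L‖
    set σ := r ^ n * s
    have hσ : r ^ (n + 1) * s = r * σ := by rw [pow_succ', mul_assoc]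
    rw [hσ] at hsa ⊢
    have hσ0 : 0 < σ := by positivity
    have hσa : σ ≤ a := (le_mul_of_one_le_left hσ0.le hL).trans hsa
    have hstep := norm_sub_apply_le_mul_add hα hF ((L ^ n) v) (hv n n.lt_succ_self) hσa
    rw [Function.iterate_succ_apply', pow_succ', mul_apply_eq_comp]
    have hih := ih hσa fun k hk => hv k (hk.trans n.lt_succ_self)
    calc (r - 1) * ‖F (F^[n] v) - L ((L ^ n) v)‖
        ≤ (r - 1) * (r * ‖F^[n] v - (L ^ n) v‖ + α σ * σ) :=
          mul_le_mul_of_nonneg_left hstep (sub_nonneg.2 hL)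
      _ = r * ((r - 1) * ‖F^[n] v - (L ^ n) v‖) + (r - 1) * (α σ * σ) := by ring
      _ ≤ r * (σ * diniIntegral α σ) + (r - 1) * (α σ * σ) := by
          gcongr r * ?_ + _
      _ = r * σ * (diniIntegral α σ + (r - 1) / r * α σ) := by field_simp
      _ ≤ r * σ * diniIntegral α (r * σ) := by
          gcongr
          exact hα.diniIntegral_add_le_diniIntegral_mul hL hσ0 hsa

lemma norm_iterate_sub_pow_apply_le_half (hL : 1 < ‖L‖) (hα : IsDiniModulus α a)
    (hF : ∀ u : E, ‖u‖ ≤ a → ‖F u - L u‖ ≤ α ‖u‖ * ‖u‖) {t : ℝ} (hta : t ≤ a)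
    (ht : diniIntegral α t ≤ (‖L‖ - 1) / 4) {v : E} (hv : 0 < ‖v‖) {n : ℕ}
    (hn : ‖L‖ ^ n * (2 * ‖v‖) ≤ t) :
    ‖F^[n] v - (L ^ n) v‖ ≤ ‖L‖ ^ n * ‖v‖ / 2 := by
  induction n using Nat.strong_induction_on with
  | _ n ih =>
    have horbit : ∀ k < n, ‖F^[k] v‖ ≤ ‖L‖ ^ k * (2 * ‖v‖) := fun k hk => by
      have hkt : ‖L‖ ^ k * (2 * ‖v‖) ≤ t := le_trans (by gcongr; exact hL.le) hn
      have hdev := ih k hk hkt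
      have hlin := norm_pow_apply_le L k v
      have htri := norm_le_norm_add_norm_sub' (F^[k] v) ((L ^ k) v)
      have hpos : 0 ≤ ‖L‖ ^ k * ‖v‖ := by positivity
      linarith
    have hdev := mul_norm_iterate_sub_pow_apply_le hL.le hα hF (by positivity) (hn.trans hta) horbit
    have hdini := (hα.diniIntegral_le_diniIntegral hn hta).trans ht
    refine le_of_mul_le_mul_left ?_ (sub_pos.2 hL)
    calc (‖L‖ - 1) * ‖F^[n] v - (L ^ n) v‖
        ≤ ‖L‖ ^ n * (2 * ‖v‖) * diniIntegral α (‖L‖ ^ n * (2 * ‖v‖)) := hdev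
      _ ≤ ‖L‖ ^ n * (2 * ‖v‖) * ((‖L‖ - 1) / 4) := by gcongr
      _ = (‖L‖ - 1) * (‖L‖ ^ n * ‖v‖ / 2) := by ring

lemma quarter_mul_pow_mul_norm_le_norm_iterate (hL : 1 < ‖L‖) (hα : IsDiniModulus α a)
    (hF : ∀ u : E, ‖u‖ ≤ a → ‖F u - L u‖ ≤ α ‖u‖ * ‖u‖) {t : ℝ} (hta : t ≤ a)
    (ht : diniIntegral α t ≤ (‖L‖ - 1) / 4) {v : E} (hv : 0 < ‖v‖) {n : ℕ}
    (hn : ‖L‖ ^ n * (2 * ‖v‖) ≤ t) (hvn : 3 / 4 * ‖L‖ ^ n * ‖v‖ ≤ ‖(L ^ n) v‖) :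
    1 / 4 * ‖L‖ ^ n * ‖v‖ ≤ ‖F^[n] v‖ := by
  have hdev := norm_iterate_sub_pow_apply_le_half hL hα hF hta ht hv hn
  have htri := norm_le_norm_add_norm_sub (F^[n] v) ((L ^ n) v)
  linarith

theorem stmt_11_general (hL : 1 < ‖L‖) (hpow : ∀ n ≠ 0, ‖L ^ n‖ = ‖L‖ ^ n) (ha : 0 < a)
    (hα : IsDiniModulus α a) (hF : ∀ u : E, ‖u‖ ≤ a → ‖F u - L u‖ ≤ α ‖u‖ * ‖u‖) :
    IsExponentiallyUnstable F ‖L‖ := by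
  have hL0 : 0 < ‖L‖ := zero_lt_one.trans hL
  obtain ⟨κ, hκ⟩ := NormedField.exists_one_lt_norm 𝕜
  have : 0 < ‖κ‖ := zero_lt_one.trans hκ
  obtain ⟨t, ⟨ht0, hta⟩, ht⟩ := hα.exists_diniIntegral_lt ha (c := (‖L‖ - 1) / 4) (by linarith)
  refine ⟨t / (8 * ‖L‖ * ‖κ‖), by positivity, 1 / 4, by norm_num, fun δ hδ => ?_⟩
  obtain ⟨d, hd0, hdδ, hdt⟩ : ∃ d : ℝ, 0 < d ∧ d ≤ δ ∧ d ≤ t / 2 :=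
    ⟨min δ (t / 2), by positivity, min_le_left _ _, min_le_right _ _⟩
  obtain ⟨N, hNt, htN⟩ := exists_nat_pow_near (x := t / (2 * d)) (y := ‖L‖)
    ((one_le_div (by positivity)).2 (by linarith)) hL
  rw [le_div_iff₀ (by positivity)] at hNt
  rw [div_lt_iff₀ (by positivity)] at htN
  obtain ⟨v, hdv, hvd, hv⟩ := exists_shell_forall_mul_pow_mul_norm_le_norm_pow_apply hL0
    (hpow (N + 1) N.succ_ne_zero) (c := 3 / 4) (by norm_num) (by norm_num) hκ hd0
  have hv0 : 0 < ‖v‖ := (by positivity : 0 < d / ‖κ‖).trans_le hdv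
  have hgrowth : ∀ n ≤ N, 1 / 4 * ‖L‖ ^ n * ‖v‖ ≤ ‖F^[n] v‖ := fun n hn =>
    quarter_mul_pow_mul_norm_le_norm_iterate hL hα hF hta ht.le hv0
      (le_trans (by gcongr; exact hL.le) hNt) (hv n (hn.trans N.le_succ))
  have hexit : t / (8 * ‖L‖ * ‖κ‖) < ‖F^[N] v‖ :=
    calc t / (8 * ‖L‖ * ‖κ‖) < ‖L‖ ^ (N + 1) * (2 * d) / (8 * ‖L‖ * ‖κ‖) := by gcongr
      _ = 1 / 4 * ‖L‖ ^ N * (d / ‖κ‖) := by field_simp; ring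
      _ ≤ 1 / 4 * ‖L‖ ^ N * ‖v‖ := by gcongr
      _ ≤ ‖F^[N] v‖ := hgrowth N le_rfl
  refine ⟨fun n => F^[n] v, fun n => Function.iterate_succ_apply' F n v, hv0, hvd.le.trans hdδ,
    fun n hn => hgrowth n ?_⟩
  by_contra! hNn
  exact (hn N hNn.le).not_gt hexit

end Instability

/-- sharpened Rutman–Daleckii theorem in the normal case. If `L` is
a bounded normal operator on a complex Hilbert space with spectral radius
`r = r(L) > 1`, and `‖𝓕(u) - Lu‖ ≤ α(‖u‖)‖u‖` for `‖u‖ ≤ a` with `α` nondecreasing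
and `∫₀^a α(s)/s ds < ∞`, then the origin is exponentially unstable at the linear
rate `r(L)` for the iteration `u_{n+1} = 𝓕(u_n)`. -/
theorem stmt_11 {B : Type*} [NormedAddCommGroup B] [InnerProductSpace ℂ B]
    [CompleteSpace B]
    (L : B →L[ℂ] B)
    (hnormal : L ∘L ContinuousLinearMap.adjoint L = ContinuousLinearMap.adjoint L ∘L L)
    (r : ℝ) (hr : spectralRadius ℂ L = ENNReal.ofReal r) (hr1 : 1 < r)
    (a : ℝ) (ha : 0 < a)
    (α : ℝ → ℝ) (hα_mono : MonotoneOn α (Set.Icc 0 a))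
    (hα_nonneg : ∀ s ∈ Set.Icc (0 : ℝ) a, 0 ≤ α s)
    (hα_int : IntegrableOn (fun s => α s / s) (Set.Ioc 0 a))
    (F : B → B) (hF0 : F 0 = 0)
    (hF : ∀ u : B, ‖u‖ ≤ a → ‖F u - L u‖ ≤ α ‖u‖ * ‖u‖) :
    ∃ ε > (0 : ℝ), ∃ C > (0 : ℝ), ∀ δ > (0 : ℝ), ∃ u : ℕ → B,
      (∀ n, u (n + 1) = F (u n)) ∧ 0 < ‖u 0‖ ∧ ‖u 0‖ ≤ δ ∧
      ∀ n : ℕ, (∀ k ≤ n, ‖u k‖ ≤ ε) → C * r ^ n * ‖u 0‖ ≤ ‖u n‖ := by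
  have : IsStarNormal L := ⟨hnormal.symm⟩
  obtain rfl := norm_eq_of_spectralRadius_eq_ofReal (zero_le_one.trans hr1.le) hr
  exact stmt_11_general hr1 (fun n hn => norm_pow_of_isStarNormal L hn) ha
    ⟨hα_mono, hα_nonneg, hα_int⟩ hF
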